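/- Let x be an 8×8 matrix over R such that: (i) x ≡ X (mod J); (ii) the entries of x in rows 1, 2, 7, 8 vanish outside columns 1, 2, 7, 8, and the entries of x in rows 3, 4, 5, 6 vanish outside columns 3, 4, 5, 6; (iii) the (1,8) entry of x equals 1 and the (2,8) entry of x equals 0. Put x' = w₂·x·w₂⁻¹ and x'' = w₁·x'·w₁⁻¹. If x·x' = x'·x, h₂·x·h₂·x = 1, x·w₁·x·w₁⁻¹ = w₁·h₂·x·h₂, and x''·x = x'·x·x'', then x = X. -/

import Mathlib

open Matrix

/-- The matrix `w₁` of Section 4 of the paper. -/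
def w₁ (R : Type*) [CommRing R] : Matrix (Fin 8) (Fin 8) R :=
  !![0, -1, 0, 0, 0, 0, 0, 0;
     -1, 0, 0, 0, 0, 0, 0, 0;
     0, 0, 0, 0, 1, 0, 0, 0;
     0, 0, 0, 0, 0, 1, 0, 0;
     0, 0, -1, 0, 0, 0, 0, 0;
     0, 0, 0, -1, 0, 0, 0, 0;
     0, 0, 0, 0, 0, 0, -1, 1;
     0, 0, 0, 0, 0, 0, 0, 1]

/-- The matrix `w₂` of Section 4 of the paper. -/
def w₂ (R : Type*) [CommRing R] : Matrix (Fin 8) (Fin 8) R :=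
  !![0, 0, 0, 0, -1, 0, 0, 0;
     0, 0, 0, 0, 0, -1, 0, 0;
     0, 0, 0, -1, 0, 0, 0, 0;
     0, 0, -1, 0, 0, 0, 0, 0;
     1, 0, 0, 0, 0, 0, 0, 0;
     0, 1, 0, 0, 0, 0, 0, 0;
     0, 0, 0, 0, 0, 0, 1, 0;
     0, 0, 0, 0, 0, 0, 1, -1]

/-- The matrix `X = x_{α₁}(1)` of Section 4 of the paper. -/
def XX (R : Type*) [CommRing R] : Matrix (Fin 8) (Fin 8) R :=
  !![1, -1, 0, 0, 0, 0, -2, 1;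
     0, 1, 0, 0, 0, 0, 0, 0;
     0, 0, 1, 0, 0, 0, 0, 0;
     0, 0, 0, 1, 0, 1, 0, 0;
     0, 0, -1, 0, 1, 0, 0, 0;
     0, 0, 0, 0, 0, 1, 0, 0;
     0, 1, 0, 0, 0, 0, 1, 0;
     0, 0, 0, 0, 0, 0, 0, 1]

/-!
Let `I` be the ideal generated by the entries of `D = x - X`. Over `R ⧸ J * I` every product of two
entries of `D` vanishes, so there the relation `x''x = x'xx''` says that its derivative at `X` kills
`D`. On matrices with the prescribed zero entries this derivative is injective: its equations can
be solved one after the other with coefficients `±1`, except for a cycle of four unknowns with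
determinant `2`. Hence `D` vanishes modulo `J * I`, that is `I = J * I`, and Nakayama's lemma
gives `I = 0`.
-/

section Nakayama

variable {R : Type*} [CommRing R] {m n : Type*}

/-- The ideal generated by the entries of a matrix. -/
def entryIdeal (D : Matrix m n R) : Ideal R :=
  Ideal.span (Set.range fun p : m × n ↦ D p.1 p.2)

theorem mem_entryIdeal (D : Matrix m n R) (i : m) (j : n) : D i j ∈ entryIdeal D :=
  Ideal.subset_span ⟨(i, j), rfl⟩

theorem eq_zero_of_map_mk_mul_entryIdeal_eq_zero [Finite m] [Finite n] {J : Ideal R}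
    (hJ : J ≤ Ideal.jacobson ⊥) {D : Matrix m n R}
    (hD : D.map (Ideal.Quotient.mk (J * entryIdeal D)) = 0) : D = 0 := by
  have hle : entryIdeal D ≤ J • entryIdeal D := by
    rw [smul_eq_mul, entryIdeal, Ideal.span_le]
    rintro _ ⟨p, rfl⟩
    exact Ideal.Quotient.eq_zero_iff_mem.1 (congr_fun₂ hD p.1 p.2)
  have hbot : entryIdeal D = ⊥ := Submodule.eq_bot_of_le_smul_of_le_jacobson_bot J _
    (Submodule.fg_span (Set.finite_range _)) hle hJ
  ext i j
  exact (Submodule.mem_bot R).1 (hbot ▸ mem_entryIdeal D i j)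

theorem map_mk_mul_entryIdeal_mul_mul_self [Fintype m] [Fintype n] {J : Ideal R}
    {D : Matrix m n R} (hD : ∀ i j, D i j ∈ J) (M : Matrix n m (R ⧸ J * entryIdeal D)) :
    D.map (Ideal.Quotient.mk (J * entryIdeal D)) * M *
      D.map (Ideal.Quotient.mk (J * entryIdeal D)) = 0 := by
  ext i j
  simp only [mul_apply, Finset.sum_mul, map_apply, Matrix.zero_apply]
  refine Finset.sum_eq_zero fun k _ ↦ Finset.sum_eq_zero fun l _ ↦ ?_
  rw [mul_right_comm, ← map_mul, Ideal.Quotient.eq_zero_iff_mem.2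
    (Ideal.mul_mem_mul (hD i l) (mem_entryIdeal D k j)), zero_mul]

end Nakayama

section Entries

variable {R : Type*} [CommRing R] {n : Type*}

theorem w₁_mul_apply (M : Matrix (Fin 8) n R) (i : Fin 8) (j : n) :
    (w₁ R * M) i j =
      ![-M 1 j, -M 0 j, M 4 j, M 5 j, -M 2 j, -M 3 j, M 7 j - M 6 j, M 7 j] i := by
  fin_cases i <;> simp [w₁, mul_apply, Fin.sum_univ_eight]; ring

theorem mul_w₁_apply (M : Matrix n (Fin 8) R) (i : n) (j : Fin 8) :
    (M * w₁ R) i j =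
      ![-M i 1, -M i 0, -M i 4, -M i 5, M i 2, M i 3, -M i 6, M i 6 + M i 7] j := by
  fin_cases j <;> simp [w₁, mul_apply, Fin.sum_univ_eight]

theorem w₂_mul_apply (M : Matrix (Fin 8) n R) (i : Fin 8) (j : n) :
    (w₂ R * M) i j =
      ![-M 4 j, -M 5 j, -M 3 j, -M 2 j, M 0 j, M 1 j, M 6 j, M 6 j - M 7 j] i := by
  fin_cases i <;> simp [w₂, mul_apply, Fin.sum_univ_eight]; ring

theorem mul_w₂_apply (M : Matrix n (Fin 8) R) (i : n) (j : Fin 8) :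
    (M * w₂ R) i j =
      ![M i 4, M i 5, -M i 3, -M i 2, -M i 0, -M i 1, M i 6 + M i 7, -M i 7] j := by
  fin_cases j <;> simp [w₂, mul_apply, Fin.sum_univ_eight]

theorem XX_mul_apply (M : Matrix (Fin 8) n R) (i : Fin 8) (j : n) :
    (XX R * M) i j =
      ![M 0 j - M 1 j - 2 * M 6 j + M 7 j, M 1 j, M 2 j, M 3 j + M 5 j, M 4 j - M 2 j, M 5 j,
        M 1 j + M 6 j, M 7 j] i := by
  fin_cases i <;> simp [XX, mul_apply, Fin.sum_univ_eight] <;> ring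

theorem mul_XX_apply (M : Matrix n (Fin 8) R) (i : n) (j : Fin 8) :
    (M * XX R) i j =
      ![M i 0, M i 1 - M i 0 + M i 6, M i 2 - M i 4, M i 3, M i 4, M i 3 + M i 5,
        M i 6 - 2 * M i 0, M i 0 + M i 7] j := by
  fin_cases j <;> simp [XX, mul_apply, Fin.sum_univ_eight] <;> ring

theorem w₁_pow_four : w₁ R ^ 4 = 1 := by
  ext i j
  simp only [pow_succ', pow_zero]
  fin_cases i <;> simp [↓w₁_mul_apply] <;> rfl

theorem w₂_pow_four : w₂ R ^ 4 = 1 := by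
  ext i j
  simp only [pow_succ', pow_zero]
  fin_cases i <;> simp [↓w₂_mul_apply] <;> rfl

theorem inv_w₁ : (w₁ R)⁻¹ = w₁ R ^ 3 :=
  inv_eq_right_inv (by rw [← pow_succ', w₁_pow_four])

theorem inv_w₂ : (w₂ R)⁻¹ = w₂ R ^ 3 :=
  inv_eq_right_inv (by rw [← pow_succ', w₂_pow_four])

theorem mul_inv_w₁_apply (M : Matrix n (Fin 8) R) (i : n) (j : Fin 8) :
    (M * (w₁ R)⁻¹) i j =
      ![-M i 1, -M i 0, M i 4, M i 5, -M i 2, -M i 3, -M i 6, M i 6 + M i 7] j := by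
  simp only [inv_w₁, pow_succ, pow_zero, one_mul, ← Matrix.mul_assoc]
  fin_cases j <;> simp [↓mul_w₁_apply]

theorem mul_inv_w₂_apply (M : Matrix n (Fin 8) R) (i : n) (j : Fin 8) :
    (M * (w₂ R)⁻¹) i j =
      ![-M i 4, -M i 5, -M i 3, -M i 2, M i 0, M i 1, M i 6 + M i 7, -M i 7] j := by
  simp only [inv_w₂, pow_succ, pow_zero, one_mul, ← Matrix.mul_assoc]
  fin_cases j <;> simp [↓mul_w₂_apply]

end Entries

section Conjugation

variable {R : Type*} [CommRing R]

/-- Conjugation by the Weyl element `w₁`, which takes the paper's `x'` to `x''`. -/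
noncomputable def weylConj₁ (x : Matrix (Fin 8) (Fin 8) R) : Matrix (Fin 8) (Fin 8) R :=
  w₁ R * x * (w₁ R)⁻¹

/-- Conjugation by the Weyl element `w₂`, which takes the paper's `x` to `x'`. -/
noncomputable def weylConj₂ (x : Matrix (Fin 8) (Fin 8) R) : Matrix (Fin 8) (Fin 8) R :=
  w₂ R * x * (w₂ R)⁻¹

theorem weylConj₁_apply (x : Matrix (Fin 8) (Fin 8) R) (i j : Fin 8) :
    weylConj₁ x i j = (w₁ R * x * (w₁ R)⁻¹) i j := rfl

theorem weylConj₂_apply (x : Matrix (Fin 8) (Fin 8) R) (i j : Fin 8) :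
    weylConj₂ x i j = (w₂ R * x * (w₂ R)⁻¹) i j := rfl

variable {n : Type*}

theorem weylConj₂_XX_mul_apply (M : Matrix (Fin 8) n R) (i : Fin 8) (j : n) :
    (weylConj₂ (XX R) * M) i j =
      ![M 0 j - M 3 j, M 1 j, M 1 j + M 2 j, M 3 j, M 4 j - M 5 j - M 6 j - M 7 j, M 5 j,
        M 5 j + M 6 j, M 5 j + M 7 j] i := by
  simp only [weylConj₂, inv_w₂, pow_succ', pow_zero, mul_one, Matrix.mul_assoc]
  fin_cases i <;> simp [↓w₂_mul_apply, ↓XX_mul_apply] <;> ring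

theorem weylConj₁_weylConj₂_XX_mul_apply (M : Matrix (Fin 8) n R) (i : Fin 8) (j : n) :
    (weylConj₁ (weylConj₂ (XX R)) * M) i j =
      ![M 0 j, M 1 j - M 5 j, M 2 j - M 3 j + M 6 j - 2 * M 7 j, M 3 j, M 0 j + M 4 j, M 5 j, M 6 j,
        M 3 j + M 7 j] i := by
  simp only [weylConj₁, inv_w₁, pow_succ', pow_zero, mul_one, Matrix.mul_assoc]
  fin_cases i <;> simp [↓w₁_mul_apply, ↓weylConj₂_XX_mul_apply] <;> ring

theorem mul_weylConj₁_weylConj₂_XX_apply (M : Matrix n (Fin 8) R) (i : n) (j : Fin 8) :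
    (M * weylConj₁ (weylConj₂ (XX R))) i j =
      ![M i 0 + M i 4, M i 1, M i 2, M i 3 - M i 2 + M i 7, M i 4, M i 5 - M i 1, M i 2 + M i 6,
        M i 7 - 2 * M i 2] j := by
  simp only [weylConj₁, weylConj₂, ← Matrix.mul_assoc]
  fin_cases j <;> simp [↓mul_w₁_apply, ↓mul_w₂_apply, ↓mul_inv_w₁_apply,
    ↓mul_inv_w₂_apply, ↓mul_XX_apply] <;> ring

theorem map_w₁ {S : Type*} [CommRing S] (f : R →+* S) : f.mapMatrix (w₁ R) = w₁ S := by
  simp [w₁, ← Matrix.ext_iff, Fin.forall_fin_succ]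

theorem map_w₂ {S : Type*} [CommRing S] (f : R →+* S) : f.mapMatrix (w₂ R) = w₂ S := by
  simp [w₂, ← Matrix.ext_iff, Fin.forall_fin_succ]

theorem map_XX {S : Type*} [CommRing S] (f : R →+* S) : f.mapMatrix (XX R) = XX S := by
  simp [XX, ← Matrix.ext_iff, Fin.forall_fin_succ, map_ofNat]

/-- The defect `x''x - x'xx''` of a Chevalley commutator relation: for `x = X` the matrices
`x`, `x'`, `x''` are root elements for `α₁`, `α₁ + α₂`, `α₂`. -/
noncomputable def commutatorDefect (x : Matrix (Fin 8) (Fin 8) R) : Matrix (Fin 8) (Fin 8) R :=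
  weylConj₁ (weylConj₂ x) * x - weylConj₂ x * x * weylConj₁ (weylConj₂ x)

/-- The derivative of `commutatorDefect` at `X` in the direction `D`. -/
noncomputable def linearizedDefect (D : Matrix (Fin 8) (Fin 8) R) : Matrix (Fin 8) (Fin 8) R :=
  weylConj₁ (weylConj₂ D) * XX R + weylConj₁ (weylConj₂ (XX R)) * D -
    (weylConj₂ D * XX R * weylConj₁ (weylConj₂ (XX R)) +
      weylConj₂ (XX R) * D * weylConj₁ (weylConj₂ (XX R)) +
      weylConj₂ (XX R) * (XX R * weylConj₁ (weylConj₂ D)))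

theorem commutatorDefect_map {S : Type*} [CommRing S] (f : R →+* S)
    (x : Matrix (Fin 8) (Fin 8) R) :
    commutatorDefect (f.mapMatrix x) = f.mapMatrix (commutatorDefect x) := by
  simp only [commutatorDefect, weylConj₁, weylConj₂, inv_w₁, inv_w₂, map_sub, map_mul, map_pow,
    map_w₁, map_w₂]

theorem commutatorDefect_XX : commutatorDefect (XX R) = 0 := by
  rw [commutatorDefect, sub_eq_zero, ← mul_one (_ * XX R), ← mul_one (_ * weylConj₁ _)]
  simp only [Matrix.mul_assoc]
  ext i j
  fin_cases i <;>
    simp [↓weylConj₁_weylConj₂_XX_mul_apply, ↓weylConj₂_XX_mul_apply, ↓XX_mul_apply] <;> ring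

theorem commutatorDefect_XX_add {D : Matrix (Fin 8) (Fin 8) R} (hD : ∀ M, D * M * D = 0) :
    commutatorDefect (XX R + D) = linearizedDefect D := by
  have h₁ : weylConj₁ (weylConj₂ D) * D = 0 := by
    simpa only [weylConj₁, weylConj₂, mul_assoc, mul_zero] using
      congrArg (w₁ R * w₂ R * ·) (hD ((w₂ R)⁻¹ * (w₁ R)⁻¹))
  have h₂ : weylConj₂ D * D = 0 := by
    simpa only [weylConj₂, mul_assoc, mul_zero] using congrArg (w₂ R * ·) (hD (w₂ R)⁻¹)
  have h₃ : D * weylConj₁ (weylConj₂ D) = 0 := by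
    simpa only [weylConj₁, weylConj₂, mul_assoc, zero_mul] using
      congrArg (· * ((w₂ R)⁻¹ * (w₁ R)⁻¹)) (hD (w₁ R * w₂ R))
  have h₄ : weylConj₂ D * XX R * weylConj₁ (weylConj₂ D) = 0 := by
    simpa only [weylConj₁, weylConj₂, mul_assoc, mul_zero, zero_mul] using
      congrArg (w₂ R * · * ((w₂ R)⁻¹ * (w₁ R)⁻¹)) (hD ((w₂ R)⁻¹ * XX R * (w₁ R * w₂ R)))
  have hadd₁ (x y : Matrix (Fin 8) (Fin 8) R) :
      weylConj₁ (x + y) = weylConj₁ x + weylConj₁ y := by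
    simp only [weylConj₁, mul_add, add_mul]
  have hadd₂ (x y : Matrix (Fin 8) (Fin 8) R) :
      weylConj₂ (x + y) = weylConj₂ x + weylConj₂ y := by
    simp only [weylConj₂, mul_add, add_mul]
  rw [← sub_zero (commutatorDefect _), ← commutatorDefect_XX]
  simp only [commutatorDefect, linearizedDefect, hadd₁, hadd₂, mul_add, add_mul, h₁, h₂, h₄,
    zero_mul]
  simp only [mul_assoc, h₃, mul_zero]
  abel

end Conjugation

section BlockSupport

variable {R : Type*} [CommRing R]

/-- The matrices respecting the decomposition of the eight coordinates into `{0, 1, 6, 7}` and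
`{2, 3, 4, 5}`; they are block diagonal after reordering the basis. -/
def IsBlockSupported (D : Matrix (Fin 8) (Fin 8) R) : Prop :=
  ∀ i j, (i ∈ ({0, 1, 6, 7} : Finset (Fin 8)) ↔ j ∉ ({0, 1, 6, 7} : Finset (Fin 8))) →
    D i j = 0

theorem IsBlockSupported.sub {D E : Matrix (Fin 8) (Fin 8) R} (hD : IsBlockSupported D)
    (hE : IsBlockSupported E) : IsBlockSupported (D - E) := fun i j hij ↦ by
  rw [Matrix.sub_apply, hD i j hij, hE i j hij, sub_zero]

theorem IsBlockSupported.map {S : Type*} [CommRing S] {D : Matrix (Fin 8) (Fin 8) R}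
    (hD : IsBlockSupported D) (f : R →+* S) : IsBlockSupported (D.map f) := fun i j hij ↦ by
  rw [map_apply, hD i j hij, map_zero]

theorem isBlockSupported_of_apply_eq_zero {D : Matrix (Fin 8) (Fin 8) R}
    (h₁ : ∀ i j : Fin 8, i ∈ ({0, 1, 6, 7} : Finset (Fin 8)) →
      j ∉ ({0, 1, 6, 7} : Finset (Fin 8)) → D i j = 0)
    (h₂ : ∀ i j : Fin 8, i ∈ ({2, 3, 4, 5} : Finset (Fin 8)) →
      j ∉ ({2, 3, 4, 5} : Finset (Fin 8)) → D i j = 0) : IsBlockSupported D := by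
  have hmem : ∀ i : Fin 8, i ∈ ({2, 3, 4, 5} : Finset (Fin 8)) ↔
      i ∉ ({0, 1, 6, 7} : Finset (Fin 8)) := by decide
  intro i j hij
  by_cases hi : i ∈ ({0, 1, 6, 7} : Finset (Fin 8))
  · exact h₁ i j hi (hij.1 hi)
  · exact h₂ i j ((hmem i).2 hi) fun hj ↦ hi (hij.2 ((hmem j).1 hj))

theorem isBlockSupported_XX : IsBlockSupported (XX R) := by
  intro i j hij
  fin_cases i <;> fin_cases j <;> first | rfl | exact absurd hij (by decide)

end BlockSupport

section Elimination

variable {R : Type*} [CommRing R] {D : Matrix (Fin 8) (Fin 8) R}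

-- Every equation contains exactly one unknown that is absent from the preceding ones; it is written
-- first and has coefficient `±1`.
theorem linearizedDefect_triangular_equations (hD : IsBlockSupported D) (h17 : D 1 7 = 0)
    (h : linearizedDefect D = 0) :
    -D 5 4 = 0 ∧ -D 2 3 = 0 ∧ -D 1 0 = 0 ∧ -D 5 2 - D 5 4 = 0 ∧ D 1 1 - D 5 2 - D 5 4 = 0 ∧
    D 2 5 + 2 * D 5 2 - 2 * D 1 0 = 0 ∧ D 6 0 - D 5 2 = 0 ∧ -D 1 6 - D 2 5 = 0 ∧
    -D 4 5 - D 2 5 - D 5 4 - D 6 0 = 0 ∧ -D 5 3 + D 5 2 - D 6 0 = 0 ∧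
    -D 4 3 - D 2 3 - D 5 4 - D 6 0 = 0 ∧ D 6 7 + 2 * D 5 2 - 2 * D 6 0 = 0 ∧
    D 7 0 - D 2 5 - D 5 4 - D 6 0 = 0 ∧ D 3 2 + D 1 0 - D 4 3 - D 5 3 - D 6 0 - D 7 0 = 0 ∧
    D 3 4 + D 2 3 + D 4 3 = 0 ∧ -D 5 5 + D 5 4 - D 4 5 = 0 ∧
    -D 4 4 + D 2 5 + D 4 5 + D 5 4 + D 6 0 + D 7 0 = 0 ∧ -D 0 0 + D 2 3 + D 4 3 + D 5 4 = 0 ∧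
    -D 6 6 + D 6 0 - D 5 2 - D 6 7 = 0 ∧ -D 7 7 + 2 * D 5 2 + D 6 7 + 2 * D 7 0 - 2 * D 6 0 = 0 ∧
    D 2 4 + 2 * D 4 4 - D 4 5 - D 5 5 = 0 ∧
    D 7 6 + D 3 2 + 2 * D 4 4 + D 6 6 + D 6 7 + D 7 7 - D 1 6 - D 4 3 - 2 * D 5 5 = 0 ∧
    -D 3 3 - D 3 2 = 0 ∧ D 2 2 - D 3 2 - D 3 4 = 0 := by
  replace h := congr_fun₂ h
  unfold IsBlockSupported at hD
  refine ⟨.trans ?_ (h 1 0), .trans ?_ (h 3 2), .trans ?_ (h 5 4), .trans ?_ (h 1 3),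
    .trans ?_ (h 1 5), .trans ?_ (h 5 7), .trans ?_ (h 6 2), .trans ?_ (h 3 1), .trans ?_ (h 6 0),
    .trans ?_ (h 6 3), .trans ?_ (h 6 4), .trans ?_ (h 6 7), .trans ?_ (h 7 0), .trans ?_ (h 0 2),
    .trans ?_ (h 0 4), .trans ?_ (h 1 1), .trans ?_ (h 4 0), .trans ?_ (h 4 4), .trans ?_ (h 6 6),
    .trans ?_ (h 7 7), .trans ?_ (h 0 1), .trans ?_ (h 0 6), .trans ?_ (h 2 2),
    .trans ?_ (h 2 3)⟩ <;>
    simp [linearizedDefect, ↓weylConj₁_weylConj₂_XX_mul_apply,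
      ↓mul_weylConj₁_weylConj₂_XX_apply, ↓weylConj₂_XX_mul_apply, ↓XX_mul_apply, ↓mul_XX_apply,
      ↓weylConj₁_apply, ↓weylConj₂_apply, ↓mul_inv_w₁_apply, ↓mul_inv_w₂_apply, ↓w₁_mul_apply,
      ↓w₂_mul_apply, ↓cons_val, hD, h17] <;> ring

theorem linearizedDefect_residual_equations (hD : IsBlockSupported D) (h07 : D 0 7 = 0)
    (h : linearizedDefect D = 0) :
    D 0 1 + D 2 2 + D 3 5 + D 4 5 - D 4 4 = 0 ∧ D 0 1 + D 1 1 - D 3 2 - D 3 4 - D 4 2 = 0 ∧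
    D 3 5 + D 6 6 + D 6 7 + D 7 1 - D 2 2 - D 5 5 - D 7 6 - D 7 7 = 0 ∧
    D 6 6 + D 6 7 - D 2 2 - D 4 2 - D 5 5 - D 7 1 = 0 ∧
    D 1 1 + D 3 3 + D 4 3 - D 3 2 - D 4 2 - D 4 4 - D 6 1 - D 7 1 = 0 ∧
    D 0 6 + D 3 5 + 2 * D 4 2 + D 6 6 + D 6 7 + D 7 7 - 2 * D 0 0 - 2 * D 5 2 - 2 * D 7 6 = 0 := by
  replace h := congr_fun₂ h
  unfold IsBlockSupported at hD
  refine ⟨.trans ?_ (h 0 5), .trans ?_ (h 2 5), .trans ?_ (h 7 5), .trans ?_ (h 6 5),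
    .trans ?_ (h 0 3), .trans ?_ (h 4 7)⟩ <;>
    simp [linearizedDefect, ↓weylConj₁_weylConj₂_XX_mul_apply,
      ↓mul_weylConj₁_weylConj₂_XX_apply, ↓weylConj₂_XX_mul_apply, ↓XX_mul_apply, ↓mul_XX_apply,
      ↓weylConj₁_apply, ↓weylConj₂_apply, ↓mul_inv_w₁_apply, ↓mul_inv_w₂_apply, ↓w₁_mul_apply,
      ↓w₂_mul_apply, ↓cons_val, hD, h07] <;> ring

theorem apply_eq_zero_of_linearizedDefect_eq_zero (hD : IsBlockSupported D) (h07 : D 0 7 = 0)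
    (h17 : D 1 7 = 0) (h : linearizedDefect D = 0) {i j : Fin 8}
    (hij : (i, j) ∉ ({(0, 1), (0, 6), (3, 5), (4, 2), (6, 1), (7, 1)} : Finset (Fin 8 × Fin 8))) :
    D i j = 0 := by
  obtain ⟨e10, e32, e54, e13, e15, e57, e62, e31, e60, e63, e64, e67, e70, e02, e04, e11, e40,
    e44, e66, e77, e01, e06, e22, e23⟩ :=
    linearizedDefect_triangular_equations hD h17 h
  have h54 : D 5 4 = 0 := by linear_combination -e10
  have h23 : D 2 3 = 0 := by linear_combination -e32
  have h10 : D 1 0 = 0 := by linear_combination -e54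
  have h52 : D 5 2 = 0 := by linear_combination -e13 - h54
  have h11 : D 1 1 = 0 := by linear_combination e15 + h52 + h54
  have h25 : D 2 5 = 0 := by linear_combination e57 + 2 * h10 - 2 * h52
  have h60 : D 6 0 = 0 := by linear_combination e62 + h52
  have h16 : D 1 6 = 0 := by linear_combination -e31 - h25
  have h45 : D 4 5 = 0 := by linear_combination -e60 - h25 - h54 - h60
  have h53 : D 5 3 = 0 := by linear_combination -e63 + h52 - h60
  have h43 : D 4 3 = 0 := by linear_combination -e64 - h23 - h54 - h60
  have h67 : D 6 7 = 0 := by linear_combination e67 - 2 * h52 + 2 * h60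
  have h70 : D 7 0 = 0 := by linear_combination e70 + h25 + h54 + h60
  have h32 : D 3 2 = 0 := by linear_combination e02 - h10 + h43 + h53 + h60 + h70
  have h34 : D 3 4 = 0 := by linear_combination e04 - h23 - h43
  have h55 : D 5 5 = 0 := by linear_combination -e11 - h45 + h54
  have h44 : D 4 4 = 0 := by linear_combination -e40 + h25 + h45 + h54 + h60 + h70
  have h00 : D 0 0 = 0 := by linear_combination -e44 + h23 + h43 + h54
  have h66 : D 6 6 = 0 := by linear_combination -e66 - h52 + h60 - h67
  have h77 : D 7 7 = 0 := by linear_combination -e77 + 2 * h52 - 2 * h60 + h67 + 2 * h70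
  have h24 : D 2 4 = 0 := by linear_combination e01 - 2 * h44 + h45 + h55
  have h76 : D 7 6 = 0 := by
    linear_combination e06 + h16 - h32 + h43 - 2 * h44 + 2 * h55 - h66 - h67 - h77
  have h33 : D 3 3 = 0 := by linear_combination -e22 - h32
  have h22 : D 2 2 = 0 := by linear_combination e23 + h32 + h34
  fin_cases i <;> fin_cases j <;>
    first | assumption | exact hD _ _ (by decide) | exact absurd (by decide) hij

theorem eq_zero_of_linearizedDefect_eq_zero (h2 : IsLeftRegular (2 : R)) (hD : IsBlockSupported D)
    (h07 : D 0 7 = 0) (h17 : D 1 7 = 0) (h : linearizedDefect D = 0) : D = 0 := by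
  obtain ⟨e05, e25, e75, e65, e03, e47⟩ := linearizedDefect_residual_equations hD h07 h
  have hz : ∀ {i j}, _ → D i j = 0 := apply_eq_zero_of_linearizedDefect_eq_zero hD h07 h17 h
  simp (disch := decide) only [hz] at e05 e25 e75 e65 e03 e47
  -- What is left of the first four equations is a cycle in `D 0 1`, `D 4 2`, `D 7 1`, `D 3 5`,
  -- whose determinant is `2`.
  have h01 : D 0 1 = 0 := h2 (by linear_combination e05 + e25 - e75 - e65)
  have h35 : D 3 5 = 0 := by linear_combination e05 - h01
  have h42 : D 4 2 = 0 := by linear_combination h01 - e25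
  have h71 : D 7 1 = 0 := by linear_combination e75 - h35
  have h61 : D 6 1 = 0 := by linear_combination -e03 - h42 - h71
  have h06 : D 0 6 = 0 := by linear_combination e47 - h35 - 2 * h42
  ext i j
  fin_cases i <;> fin_cases j <;> first | assumption | exact hz (by decide)

end Elimination

theorem stmt11_general {R : Type*} [CommRing R] (h2 : IsUnit (2 : R))
    (x : Matrix (Fin 8) (Fin 8) R) (hmod : ∀ i j, (x - XX R) i j ∈ Ideal.jacobson (⊥ : Ideal R))
    (hblock1 : ∀ i j : Fin 8, i ∈ ({0, 1, 6, 7} : Finset (Fin 8)) →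
      j ∉ ({0, 1, 6, 7} : Finset (Fin 8)) → x i j = 0)
    (hblock2 : ∀ i j : Fin 8, i ∈ ({2, 3, 4, 5} : Finset (Fin 8)) →
      j ∉ ({2, 3, 4, 5} : Finset (Fin 8)) → x i j = 0)
    (h18 : x 0 7 = 1) (h28 : x 1 7 = 0)
    (hcon : (w₁ R * (w₂ R * x * (w₂ R)⁻¹) * (w₁ R)⁻¹) * x
      = (w₂ R * x * (w₂ R)⁻¹) * x * (w₁ R * (w₂ R * x * (w₂ R)⁻¹) * (w₁ R)⁻¹)) :
    x = XX R := by
  let f := Ideal.Quotient.mk (Ideal.jacobson ⊥ * entryIdeal (x - XX R))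
  have h2f : IsLeftRegular (2 : R ⧸ Ideal.jacobson ⊥ * entryIdeal (x - XX R)) := by
    simpa only [map_ofNat] using (h2.map f).isRegular.left
  have hblock : IsBlockSupported (x - XX R) :=
    (isBlockSupported_of_apply_eq_zero hblock1 hblock2).sub isBlockSupported_XX
  have h07 : (x - XX R) 0 7 = 0 := by simp [h18, XX]
  have h17 : (x - XX R) 1 7 = 0 := by simp [h28, XX]
  have hlin : linearizedDefect ((x - XX R).map f) = 0 := by
    rw [← commutatorDefect_XX_add (map_mk_mul_entryIdeal_mul_mul_self hmod), ← map_XX f,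
      ← RingHom.mapMatrix_apply, ← map_add, add_sub_cancel, commutatorDefect_map]
    exact (congrArg _ (sub_eq_zero.2 hcon)).trans (map_zero _)
  have hzero : (x - XX R).map f = 0 := eq_zero_of_linearizedDefect_eq_zero h2f (hblock.map f)
    (by rw [map_apply, h07, map_zero]) (by rw [map_apply, h17, map_zero]) hlin
  exact sub_eq_zero.1 (eq_zero_of_map_mk_mul_entryIdeal_eq_zero le_rfl hzero)

/-- Over a commutative local ring `R` with `2` invertible (maximal
ideal `J`), let `x` be an `8 × 8` matrix with (i) `x ≡ X (mod J)`; (ii) the entries of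
`x` in rows `1,2,7,8` vanish outside columns `1,2,7,8` and those in rows `3,4,5,6`
vanish outside columns `3,4,5,6`; (iii) `x₁₈ = 1` and `x₂₈ = 0`.  Put
`x' = w₂·x·w₂⁻¹`, `x'' = w₁·x'·w₁⁻¹`, `h₂ = w₂·w₂`.  If `x·x' = x'·x`,
`h₂·x·h₂·x = 1`, `x·w₁·x·w₁⁻¹ = w₁·h₂·x·h₂` and `x''·x = x'·x·x''`, then `x = X`. -/
theorem stmt11 {R : Type*} [CommRing R] [IsLocalRing R] [Invertible (2 : R)]
    (x : Matrix (Fin 8) (Fin 8) R)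
    (hmod : ∀ i j, (x - XX R) i j ∈ IsLocalRing.maximalIdeal R)
    (hblock1 : ∀ i j : Fin 8, i ∈ ({0, 1, 6, 7} : Finset (Fin 8)) →
      j ∉ ({0, 1, 6, 7} : Finset (Fin 8)) → x i j = 0)
    (hblock2 : ∀ i j : Fin 8, i ∈ ({2, 3, 4, 5} : Finset (Fin 8)) →
      j ∉ ({2, 3, 4, 5} : Finset (Fin 8)) → x i j = 0)
    (h18 : x 0 7 = 1) (h28 : x 1 7 = 0)
    (hcon1 : x * (w₂ R * x * (w₂ R)⁻¹) = (w₂ R * x * (w₂ R)⁻¹) * x)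
    (hcon2 : (w₂ R * w₂ R) * x * (w₂ R * w₂ R) * x = 1)
    (hcon3 : x * w₁ R * x * (w₁ R)⁻¹ = w₁ R * (w₂ R * w₂ R) * x * (w₂ R * w₂ R))
    (hcon4 : (w₁ R * (w₂ R * x * (w₂ R)⁻¹) * (w₁ R)⁻¹) * x
      = (w₂ R * x * (w₂ R)⁻¹) * x * (w₁ R * (w₂ R * x * (w₂ R)⁻¹) * (w₁ R)⁻¹)) :
    x = XX R := by
  exact stmt11_general (isUnit_of_invertible 2) x
    (fun i j ↦ IsLocalRing.maximalIdeal_le_jacobson ⊥ (hmod i j)) hblock1 hblock2 h18 h28 hcon4
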